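/- Let I be an ideal of a commutative ring R with finitely many minimal primes P₁,…,Pₛ (s ≥ 2), fix P = P₁, and suppose s ∈ R satisfies s ∉ P and s ∈ Pⱼ for all j ≥ 2. Then the saturation I : s^∞ has radical equal to P; in particular I : s^∞ is pseudo-primary. -/

import Mathlib

/-- The saturation `I : s^∞ = ⋃ k, (I : s^k)`. -/
def Ideal.sat {R : Type*} [CommRing R] (I : Ideal R) (s : R) : Ideal R :=
  ⨆ k : ℕ, I.colon (Ideal.span {s ^ k})

section Saturation

variable {R : Type*} [CommRing R] {I P : Ideal R} {s f : R}

theorem colon_span_pow_monotone (I : Ideal R) (s : R) :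
    Monotone fun k : ℕ => I.colon (Ideal.span {s ^ k} : Set R) := fun _ _ hkl =>
  Submodule.colon_mono le_rfl (Ideal.span_singleton_le_span_singleton.2 (pow_dvd_pow s hkl))

theorem mem_sat_iff : f ∈ I.sat s ↔ ∃ k : ℕ, f * s ^ k ∈ I := by
  rw [Ideal.sat, Submodule.mem_iSup_of_directed _ (colon_span_pow_monotone I s).directed_le]
  simp only [Ideal.mem_colon_span_singleton]

theorem mem_radical_sat_iff : f ∈ (I.sat s).radical ↔ f * s ∈ I.radical := by
  simp only [Ideal.mem_radical_iff, mem_sat_iff]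
  constructor
  · rintro ⟨n, k, h⟩
    have h_factor : (f * s) ^ (n + k) = f ^ n * s ^ k * (f ^ k * s ^ n) := by ring
    exact ⟨n + k, h_factor ▸ I.mul_mem_right _ h⟩
  · rintro ⟨n, h⟩
    exact ⟨n, n, mul_pow f s n ▸ h⟩

-- Geometrically, `V(I : s^∞)` is the closure of `V(I) \ V(s)`: only the components of `V(I)` not
-- contained in `V(s)` survive.
theorem radical_sat_eq_sInf_minimalPrimes (I : Ideal R) (s : R) :
    (I.sat s).radical = sInf {Q ∈ I.minimalPrimes | s ∉ Q} := by
  ext f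
  rw [mem_radical_sat_iff, ← Ideal.sInf_minimalPrimes]
  simp only [Submodule.mem_sInf, Set.mem_ofPred_eq, and_imp]
  refine forall₂_congr fun Q hQ => ?_
  rw [hQ.1.1.mul_mem_iff_mem_or_mem, or_iff_not_imp_right]

theorem stmt_8_general (hP : P ∈ I.minimalPrimes) (hsP : s ∉ P)
    (hs : ∀ Q ∈ I.minimalPrimes, Q ≠ P → s ∈ Q) : (I.sat s).radical = P := by
  have h_unique : {Q ∈ I.minimalPrimes | s ∉ Q} = {P} :=
    Set.eq_singleton_iff_unique_mem.2
      ⟨⟨hP, hsP⟩, fun Q ⟨hQ, hsQ⟩ => not_imp_comm.1 (hs Q hQ) hsQ⟩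
  rw [radical_sat_eq_sInf_minimalPrimes, h_unique, sInf_singleton]

end Saturation

theorem stmt_8 {R : Type*} [CommRing R] [IsNoetherianRing R]
    (I : Ideal R) (m : ℕ) (hm : 2 ≤ m) (P : Fin m → Ideal R) (i₀ : Fin m)
    (hmin : I.minimalPrimes = Set.range P) (hinj : Function.Injective P)
    (s : R) (hs0 : s ∉ P i₀) (hsj : ∀ j : Fin m, j ≠ i₀ → s ∈ P j) :
    (I.sat s).radical = P i₀ :=
  stmt_8_general (hmin ▸ Set.mem_range_self i₀) hs0 <| hmin ▸ Set.forall_mem_range.2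
    fun j hj => hsj j (ne_of_apply_ne P hj)
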